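/- Let n be a positive integer and let q̃ > μ' > 0. Then P_C(N) = 1 − γ(N, (N·n·μ' + N)/(2(1 + n·q̃)))/Γ(N) tends to 1 as the integer N tends to infinity, where γ(a,s) = ∫₀^s x^{a−1} e^{−x} dx is the lower incomplete gamma function and Γ is the gamma function. -/

import Mathlib

/-!
Write the upper limit as `N * c` with `c = (n μ' + 1) / (2 (1 + n q̃)) < 1`. The ratio `γ(N, N c) / Γ(N)`
is the probability that a Gamma(`N`) variable, whose mean is `N`, falls below `N c`; the Chernoff bound
`lowerIncompleteGamma_div_Gamma_le` controls it by `(c * exp (1 - c)) ^ N`. Since `c < exp (c - 1)` for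
`c ≠ 1`, this is a geometric sequence of ratio less than `1`, so the ratio tends to `0`.
-/

open Filter

/-- The lower incomplete gamma function `γ(a, s) = ∫₀^s x^(a-1) e^(-x) dx`. -/
noncomputable def lowerIncompleteGamma (a s : ℝ) : ℝ :=
  ∫ x in (0:ℝ)..s, x ^ (a - 1) * Real.exp (-x)

/-- Chernoff bound for the lower tail of the Gamma distribution: on `(0, a c]` one has
`exp (-x) ≤ exp (a (1 - c)) * exp (-x / c)`, and the tilted integrand has total mass `c ^ a * Γ(a)`. -/
theorem lowerIncompleteGamma_div_Gamma_le {a c : ℝ} (ha : 0 < a) (hc : 0 < c) (hc1 : c ≤ 1) :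
    lowerIncompleteGamma a (a * c) / Real.Gamma a ≤ c ^ a * Real.exp (a * (1 - c)) := by
  have hG := Real.Gamma_pos_of_pos ha
  have hI : ∫ x in Set.Ioi (0 : ℝ), x ^ (a - 1) * Real.exp (-(c⁻¹ * x))
      = c ^ a * Real.Gamma a := by
    rw [Real.integral_rpow_mul_exp_neg_mul_Ioi ha (inv_pos.2 hc), one_div, inv_inv]
  -- A Bochner integral with nonzero value is that of an integrable function.
  have hint : MeasureTheory.IntegrableOn
      (fun x : ℝ => x ^ (a - 1) * Real.exp (-(c⁻¹ * x))) (Set.Ioi 0) := by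
    apply MeasureTheory.Integrable.of_integral_ne_zero
    rw [hI]
    positivity
  rw [div_le_iff₀ hG, lowerIncompleteGamma, intervalIntegral.integral_of_le (by positivity)]
  calc ∫ x in Set.Ioc 0 (a * c), x ^ (a - 1) * Real.exp (-x)
      ≤ ∫ x in Set.Ioc 0 (a * c),
          Real.exp (a * (1 - c)) * (x ^ (a - 1) * Real.exp (-(c⁻¹ * x))) := by
        apply MeasureTheory.integral_mono_of_nonneg
        · filter_upwards [MeasureTheory.ae_restrict_mem measurableSet_Ioc] with x hx
          have := hx.1
          positivity
        · exact (hint.mono_set Set.Ioc_subset_Ioi_self).const_mul _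
        · filter_upwards [MeasureTheory.ae_restrict_mem measurableSet_Ioc] with x hx
          have hx0 := hx.1
          have key : -x ≤ a * (1 - c) + -(c⁻¹ * x) := by
            have h1 : c⁻¹ * x ≤ a := by
              rw [inv_mul_le_iff₀ hc, mul_comm]
              exact hx.2
            have h2 : x = c * (c⁻¹ * x) := by field_simp
            nlinarith [mul_nonneg (sub_nonneg.2 h1) (sub_nonneg.2 hc1)]
          calc x ^ (a - 1) * Real.exp (-x)
              ≤ x ^ (a - 1) * Real.exp (a * (1 - c) + -(c⁻¹ * x)) := by gcongr
            _ = _ := by rw [Real.exp_add]; ring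
    _ = Real.exp (a * (1 - c)) *
          ∫ x in Set.Ioc 0 (a * c), x ^ (a - 1) * Real.exp (-(c⁻¹ * x)) :=
        MeasureTheory.integral_const_mul _ _
    _ ≤ Real.exp (a * (1 - c)) * (c ^ a * Real.Gamma a) := by
        rw [← hI]
        gcongr
        · filter_upwards [MeasureTheory.ae_restrict_mem measurableSet_Ioi] with x hx
          have : 0 < x := hx
          positivity
        · exact Set.Ioc_subset_Ioi_self
    _ = _ := by ring

theorem lowerIncompleteGamma_nonneg {a s : ℝ} (hs : 0 ≤ s) : 0 ≤ lowerIncompleteGamma a s := by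
  apply intervalIntegral.integral_nonneg hs
  intro x hx
  have := hx.1
  positivity

/-- **Remark 2 (second half).** Provided `q̃ > μ' > 0`, the correct detection probability
`P_C(N) = 1 − γ(N, (N·n·μ' + N)/(2(1 + n·q̃)))/Γ(N)` tends to `1` as `N → ∞`. -/
theorem correct_detection_tendsto_one
    (n : ℕ) (hn : 0 < n) (μ' qt : ℝ) (hμ' : 0 < μ') (hqt : μ' < qt) :
    Tendsto
      (fun N : ℕ =>
        1 - lowerIncompleteGamma N (((N : ℝ) * n * μ' + N) / (2 * (1 + n * qt)))
            / Real.Gamma N)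
      atTop (nhds 1) := by
  have hn' : (0 : ℝ) < n := Nat.cast_pos.2 hn
  have hq : 0 < qt := hμ'.trans hqt
  set c : ℝ := (n * μ' + 1) / (2 * (1 + n * qt)) with hcdef
  have hc : 0 < c := by positivity
  have hc1 : c < 1 := by
    rw [hcdef, div_lt_one (by positivity)]
    nlinarith [mul_lt_mul_of_pos_left hqt hn', mul_pos hn' hq]
  have hs : ∀ N : ℕ, ((N : ℝ) * n * μ' + N) / (2 * (1 + n * qt)) = N * c := by
    intro N
    rw [hcdef]
    ring
  have hr : c * Real.exp (1 - c) < 1 := by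
    have h1 : c < Real.exp (c - 1) := by
      have := Real.add_one_lt_exp (x := c - 1) (by linarith)
      linarith
    calc c * Real.exp (1 - c) < Real.exp (c - 1) * Real.exp (1 - c) := by gcongr
      _ = 1 := by rw [← Real.exp_add]; simp
  have hlim : Tendsto (fun N : ℕ => lowerIncompleteGamma N (N * c) / Real.Gamma N)
      atTop (nhds 0) := by
    refine squeeze_zero' ?_ ?_ (tendsto_pow_atTop_nhds_zero_of_lt_one (by positivity) hr)
    · exact Eventually.of_forall fun N =>
        div_nonneg (lowerIncompleteGamma_nonneg (by positivity))
          (Real.Gamma_nonneg_of_nonneg (Nat.cast_nonneg N))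
    · filter_upwards [eventually_gt_atTop 0] with N hN
      have := lowerIncompleteGamma_div_Gamma_le (a := N) (Nat.cast_pos.2 hN) hc hc1.le
      rwa [Real.rpow_natCast, Real.exp_nat_mul, ← mul_pow] at this
  simp_rw [hs]
  simpa using hlim.const_sub 1
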